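/- arXiv:1604.07200 — 2 statements merged into one kernel-verified Lean document; each statement's English description precedes it below -/
import Mathlib

section
/- For every d ≥ 1 and every D: if the bipartite graph P_d (defined over F_2) admits a projective realization of dimension D over F_2 with intersection dimension 1, then D ≥ ⌊d/2⌋·⌈d/2⌉. In particular, the projective dimension with intersection dimension 1 of P_d over F_2 is Ω(d²). -/
/-- A projective realization of a bipartite graph over a field `F`. -/
def IsProjRealization (F : Type) [Field F] {U V : Type} (E : U → V → Prop) (D : ℕ)
    (φU : U → Submodule F (Fin D → F)) (φV : V → Submodule F (Fin D → F)) : Prop :=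
  ∀ u v, E u v ↔ φU u ⊓ φV v ≠ ⊥

/-- The edge relation of the bipartite graph `P_d` over `F_2`. -/
def PdEdge (d : ℕ) (I J : Submodule (ZMod 2) (Fin d → ZMod 2)) : Prop :=
  I ⊓ J ≠ ⊥

/-!
Let `q = |F|`. Replacing each subspace by its set of vectors, a realization with intersection
dimension `1` factors the matrix `M I J = |φU I ∩ φV J|` through `F ^ D`, so `rank M ≤ q ^ D`.
Its entries are `1` if `I ⊓ J = ⊥` and `q` otherwise, so `M I J` is a function of `I ⊓ J` and
`M = Zᵀ * diag g * Z`, where `Z` is the zeta matrix of the subspace lattice and `g` is, up to a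
nonzero factor and its value at `⊥`, the Möbius function `μ(⊥, ·)`. Weisner's theorem writes
`μ(⊥, S)` for `S ≠ ⊥` as minus a nonempty sum of `μ(⊥, T)` over hyperplanes `T` of `S`, so its
sign is `(-1) ^ dim S`. Hence `M` is invertible and there are at most `q ^ D` subspaces, while the
graphs of linear maps `F ^ ⌊d/2⌋ → F ^ ⌈d/2⌉` provide `q ^ (⌊d/2⌋ * ⌈d/2⌉)` of them.
-/

open Finset Matrix Module
open IncidenceAlgebra (mu zeta)

section Moebius

variable {R α : Type*} [Ring R] [SemilatticeSup α] [OrderBot α] [LocallyFiniteOrder α]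
  [DecidableEq α] {a s : α}

/-- Weisner's theorem. -/
theorem sum_mu_bot_filter_sup_eq_zero (ha : a ≠ ⊥) :
    ∑ t ∈ Icc ⊥ s with t ⊔ a = s, mu R ⊥ t = 0 := by
  calc ∑ t ∈ Icc ⊥ s with t ⊔ a = s, mu R ⊥ t
      = ∑ t ∈ Icc ⊥ s, ∑ u ∈ Icc (t ⊔ a) s, mu R ⊥ t * mu R u s := by
        simp only [← mul_sum, IncidenceAlgebra.sum_Icc_mu_left, mul_ite, mul_one, mul_zero,
          sum_filter]
    _ = ∑ u ∈ Icc a s, ∑ t ∈ Icc ⊥ u, mu R ⊥ t * mu R u s := by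
        refine sum_comm' fun t u => ?_
        simp only [mem_Icc, bot_le, true_and, sup_le_iff]
        exact ⟨fun ⟨_, ⟨htu, hau⟩, hus⟩ => ⟨htu, hau, hus⟩,
          fun ⟨htu, hau, hus⟩ => ⟨htu.trans hus, ⟨htu, hau⟩, hus⟩⟩
    _ = 0 := by
        refine sum_eq_zero fun u hu => ?_
        have hu_bot : ⊥ ≠ u := fun h => ha (le_bot_iff.mp (h ▸ (mem_Icc.mp hu).1))
        rw [← sum_mul, IncidenceAlgebra.sum_Icc_mu_right, if_neg hu_bot, zero_mul]

theorem mu_bot_eq_neg_sum_Ico_filter_sup_eq (ha : a ≠ ⊥) (has : a ≤ s) :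
    mu R ⊥ s = -∑ t ∈ Ico ⊥ s with t ⊔ a = s, mu R ⊥ t := by
  have h_weisner := sum_mu_bot_filter_sup_eq_zero (R := R) (s := s) ha
  rwa [Icc_eq_cons_Ico bot_le,
    filter_cons_of_pos (fun t => t ⊔ a = s) _ _ _ (sup_eq_left.mpr has), sum_cons,
    ← eq_neg_iff_add_eq_zero] at h_weisner

end Moebius

theorem covBy_of_isAtom_of_sup_eq {α : Type*} [Lattice α] [OrderBot α] [IsUpperModularLattice α]
    {a s t : α} (ha : IsAtom a) (hts : t ≠ s) (h : t ⊔ a = s) : t ⋖ s := by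
  have hat : ¬a ≤ t := fun hat => hts ((sup_eq_left.mpr hat).symm.trans h)
  have h_inf : t ⊓ a = ⊥ := (ha.not_le_iff_disjoint.mp hat).symm.eq_bot
  exact h ▸ covBy_sup_of_inf_covBy_right (h_inf ▸ ha.bot_covBy)

section ModularLattice

variable {𝕜 α : Type*} [Field 𝕜] [LinearOrder 𝕜] [IsStrictOrderedRing 𝕜]
  [Lattice α] [BoundedOrder α] [IsModularLattice α] [ComplementedLattice α] [GradeMinOrder ℕ α]
  [LocallyFiniteOrder α] [DecidableEq α]

theorem neg_one_pow_grade_mul_mu_bot_pos (s : α) : 0 < (-1) ^ grade ℕ s * mu 𝕜 ⊥ s := by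
  induction s using WellFoundedLT.induction with
  | ind s ih =>
    obtain rfl | ⟨a, ha, has⟩ := eq_bot_or_exists_atom_le s
    · simp
    set lower := {t ∈ Ico ⊥ s | t ⊔ a = s} with h_lower
    have covBy_of_mem : ∀ t ∈ lower, t ⋖ s := by
      intro t ht
      rw [h_lower, mem_filter, mem_Ico] at ht
      exact covBy_of_isAtom_of_sup_eq ha ht.1.2.ne ht.2
    have nonempty : lower.Nonempty := by
      obtain ⟨t, h_disj, h_sup⟩ := IsModularLattice.exists_disjoint_and_sup_eq has
      have h_ne : t ≠ s := fun h => ha.ne_bot (h_disj.eq_bot_of_le (h ▸ has))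
      have h_lt : t < s := lt_of_le_of_ne (h_sup ▸ le_sup_right) h_ne
      exact ⟨t, mem_filter.mpr ⟨mem_Ico.mpr ⟨bot_le, h_lt⟩, (sup_comm t a).trans h_sup⟩⟩
    have sign_eq : ∀ t ∈ lower, (-1 : 𝕜) ^ grade ℕ t = -(-1) ^ grade ℕ s := by
      intro t ht
      have h_grade : grade ℕ t + 1 = grade ℕ s :=
        Order.covBy_iff_add_one_eq.mp ((covBy_of_mem t ht).grade ℕ)
      rw [← h_grade, pow_succ, mul_neg_one, neg_neg]
    calc (0 : 𝕜) < ∑ t ∈ lower, (-1) ^ grade ℕ t * mu 𝕜 ⊥ t :=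
          sum_pos (fun t ht => ih t (covBy_of_mem t ht).lt) nonempty
      _ = (-1) ^ grade ℕ s * mu 𝕜 ⊥ s := by
          rw [sum_congr rfl fun t ht => by rw [sign_eq t ht], ← mul_sum,
            mu_bot_eq_neg_sum_Ico_filter_sup_eq ha.ne_bot has, neg_mul, mul_neg]

theorem mu_bot_ne_zero (s : α) : mu 𝕜 ⊥ s ≠ 0 :=
  right_ne_zero_of_mul (neg_one_pow_grade_mul_mu_bot_pos s).ne'

end ModularLattice

section MeetMatrix

variable {R α : Type*}

theorem of_incidenceAlgebra_mul [NonUnitalNonAssocSemiring R] [Preorder α] [LocallyFiniteOrder α]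
    [Fintype α] (f g : IncidenceAlgebra R α) : of ⇑(f * g) = of ⇑f * of ⇑g := by
  ext x y
  simp only [of_apply, mul_apply, IncidenceAlgebra.mul_apply]
  refine sum_subset (subset_univ _) fun z _ hz => ?_
  rcases not_and_or.mp (mt mem_Icc.mpr hz) with hxz | hzy
  · rw [IncidenceAlgebra.apply_eq_zero_of_not_le hxz, zero_mul]
  · rw [IncidenceAlgebra.apply_eq_zero_of_not_le hzy, mul_zero]

theorem isUnit_of_zeta [CommRing R] [PartialOrder α] [Fintype α] [DecidableEq α]
    [DecidableLE α] : IsUnit (of (zeta R : IncidenceAlgebra R α)) := by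
  classical
  have : LocallyFiniteOrder α := Fintype.toLocallyFiniteOrder
  refine .of_mul_eq_one (of (mu R)) ?_
  rw [← of_incidenceAlgebra_mul, IncidenceAlgebra.zeta_mul_mu]
  ext x y
  simp only [of_apply, IncidenceAlgebra.one_apply, one_apply]

/-- The meet matrix of `f`, with entries `f (x ⊓ y)`. -/
def meetMatrix [SemilatticeInf α] (f : α → R) : Matrix α α R :=
  of fun x y => f (x ⊓ y)

variable [CommRing R] [Fintype α] [DecidableEq α]

/-- Wilf's factorization. -/
theorem meetMatrix_eq_zeta_mul_diagonal_mul_zeta [SemilatticeInf α] [DecidableLE α]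
    {f g : α → R} (hfg : ∀ x, ∑ z with z ≤ x, g z = f x) :
    meetMatrix f = (of (zeta R))ᵀ * diagonal g * of (zeta R) := by
  ext x y
  rw [mul_apply]
  simp only [meetMatrix, of_apply, ← hfg, mul_diagonal, transpose_apply, sum_filter, le_inf_iff,
    IncidenceAlgebra.zeta_apply, ite_and, ite_mul, one_mul, zero_mul, mul_ite, mul_one, mul_zero]
  refine sum_congr rfl fun z _ => ?_
  split_ifs <;> rfl

theorem isUnit_meetMatrix [SemilatticeInf α] [DecidableLE α]
    {f g : α → R} (hfg : ∀ x, ∑ z with z ≤ x, g z = f x) (hg : ∀ z, IsUnit (g z)) :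
    IsUnit (meetMatrix f) := by
  rw [meetMatrix_eq_zeta_mul_diagonal_mul_zeta hfg]
  exact (((isUnit_transpose _).mpr isUnit_of_zeta).mul
    (isUnit_diagonal.mpr (Pi.isUnit_iff.mpr hg))).mul isUnit_of_zeta

end MeetMatrix

section Intersections

theorem card_le_card_of_isUnit_ncard_inter {R ι X : Type*} [CommRing R] [Nontrivial R]
    [Fintype ι] [DecidableEq ι] [Finite X] {A B : ι → Set X}
    (h : IsUnit (of fun i j => ((A i ∩ B j).ncard : R))) :
    Fintype.card ι ≤ Nat.card X := by
  classical
  have := Fintype.ofFinite X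
  let incA : Matrix ι X R := of fun i x => if x ∈ A i then 1 else 0
  let incB : Matrix X ι R := of fun x j => if x ∈ B j then 1 else 0
  have h_factor : of (fun i j => ((A i ∩ B j).ncard : R)) = incA * incB := by
    ext i j
    rw [of_apply, ← Nat.card_coe_set_eq, Nat.card_eq_fintype_card, Fintype.card_subtype,
      ← sum_boole, mul_apply]
    simp only [incA, incB, of_apply, Set.mem_inter_iff, ite_and, ite_mul, one_mul, zero_mul]
  calc Fintype.card ι = (incA * incB).rank := (rank_of_isUnit _ (h_factor ▸ h)).symm
    _ ≤ incA.rank := rank_mul_le_left _ _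
    _ ≤ Fintype.card X := rank_le_card_width _
    _ = Nat.card X := Fintype.card_eq_nat_card

variable {α X : Type*} [Lattice α] [BoundedOrder α] [IsModularLattice α] [ComplementedLattice α]
  [GradeMinOrder ℕ α] [DecidableEq α]

theorem isUnit_meetMatrix_ite_bot {𝕜 : Type*} [Field 𝕜] [LinearOrder 𝕜] [IsStrictOrderedRing 𝕜]
    [Fintype α] {a b : 𝕜} (ha : a ≠ 0) (hab : a ≠ b) :
    IsUnit (meetMatrix fun x : α => if x = ⊥ then a else b) := by
  classical
  have : LocallyFiniteOrder α := Fintype.toLocallyFiniteOrder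
  let g : α → 𝕜 := fun z => (if z = ⊥ then b else 0) + (a - b) * mu 𝕜 ⊥ z
  refine isUnit_meetMatrix (g := g) (fun x => ?_) fun z => isUnit_iff_ne_zero.mpr ?_
  · have h_Icc : ({z | z ≤ x} : Finset α) = Icc ⊥ x := by ext; simp
    rw [h_Icc, sum_add_distrib, ← mul_sum, IncidenceAlgebra.sum_Icc_mu_right]
    by_cases hx : x = ⊥ <;> simp [hx, eq_comm]
  · obtain rfl | hz := eq_or_ne z ⊥
    · simpa [g] using ha
    · simpa [g, hz] using ⟨sub_ne_zero.mpr hab, mu_bot_ne_zero z⟩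

theorem card_le_card_of_ncard_inter_eq_ite_inf_eq_bot [Finite α] [Finite X] {A B : α → Set X}
    {a b : ℕ} (ha : a ≠ 0) (hab : a ≠ b)
    (h : ∀ x y, (A x ∩ B y).ncard = if x ⊓ y = ⊥ then a else b) :
    Nat.card α ≤ Nat.card X := by
  have := Fintype.ofFinite α
  have h_unit := isUnit_meetMatrix_ite_bot (α := α) (𝕜 := ℚ) (a := a) (b := b)
    (mod_cast ha) (mod_cast hab)
  rw [Nat.card_eq_fintype_card]
  refine card_le_card_of_isUnit_ncard_inter (R := ℚ) (A := A) (B := B) ?_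
  simpa only [meetMatrix, h, Nat.cast_ite] using h_unit

end Intersections

section Subspaces

variable {F V W : Type*} [Field F] [AddCommGroup V] [Module F V] [AddCommGroup W] [Module F W]

theorem finrank_covBy_finrank_of_covBy [FiniteDimensional F V] {S T : Submodule F V}
    (h : S ⋖ T) : finrank F S ⋖ finrank F T := by
  obtain ⟨v, hvT, hvS⟩ := SetLike.exists_of_lt h.lt
  have h_sup : F ∙ v ⊔ S = T := by
    refine (h.eq_or_eq le_sup_right ?_).resolve_left (Submodule.covBy_span_singleton_sup hvS).lt.ne'
    exact sup_le ((Submodule.span_singleton_le_iff_mem v T).mpr hvT) h.le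
  have h_le : finrank F T ≤ finrank F (F ∙ v) + finrank F S :=
    h_sup ▸ Submodule.finrank_add_le_finrank_add_finrank _ _
  have h_line : finrank F (F ∙ v) = 1 := finrank_span_singleton fun hv => hvS (hv ▸ S.zero_mem)
  have h_lt := Submodule.finrank_lt_finrank_of_lt h.lt
  exact Order.covBy_iff_add_one_eq.mpr (by omega)

/-- The grading of the lattice of subspaces by dimension. -/
noncomputable instance [FiniteDimensional F V] : GradeMinOrder ℕ (Submodule F V) where
  grade S := finrank F S
  grade_strictMono := Submodule.finrank_strictMono
  covBy_grade _ _ := finrank_covBy_finrank_of_covBy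
  isMin_grade S hS := by simp [isMin_iff_eq_bot.mp hS]

theorem linearMap_graph_injective {R M N : Type*} [Semiring R] [AddCommMonoid M] [Module R M]
    [AddCommMonoid N] [Module R N] :
    Function.Injective (LinearMap.graph : (M →ₗ[R] N) → Submodule R (M × N)) := by
  intro f g hfg
  ext x
  have h_mem : (x, f x) ∈ g.graph := hfg ▸ (f.mem_graph_iff (x, f x)).mpr rfl
  exact (g.mem_graph_iff (x, f x)).mp h_mem

theorem card_pow_mul_le_card_submodule [Finite F] [FiniteDimensional F V] {m n : ℕ}
    (h : m + n = finrank F V) : Nat.card F ^ (m * n) ≤ Nat.card (Submodule F V) := by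
  have : Finite V := Module.finite_of_finite F
  let e : ((Fin m → F) × (Fin n → F)) ≃ₗ[F] V := LinearEquiv.ofFinrankEq _ _ (by simpa using h)
  calc Nat.card F ^ (m * n) = Nat.card ((Fin m → F) →ₗ[F] (Fin n → F)) := by
        rw [natCard_eq_pow_finrank (K := F) (V := (Fin m → F) →ₗ[F] _), finrank_linearMap,
          finrank_fin_fun, finrank_fin_fun]
    _ ≤ Nat.card (Submodule F V) :=
        Nat.card_le_card_of_injective _
          ((Submodule.orderIsoMapComap e).injective.comp linearMap_graph_injective)

theorem ncard_eq_ite_of_finrank_le_one (S : Submodule F W) [FiniteDimensional F S]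
    [Decidable (S = ⊥)] (hS : finrank F S ≤ 1) :
    (S : Set W).ncard = if S = ⊥ then 1 else Nat.card F := by
  rw [← Nat.card_coe_set_eq, SetLike.coe_sort_coe, natCard_eq_pow_finrank (K := F)]
  split_ifs with h_bot
  · rw [Submodule.finrank_eq_zero.mpr h_bot, pow_zero]
  · have h_pos : 0 < finrank F S := Nat.pos_of_ne_zero (mt Submodule.finrank_eq_zero.mp h_bot)
    rw [le_antisymm hS h_pos, pow_one]

theorem stmt_2_general [Finite F] [FiniteDimensional F V] [FiniteDimensional F W]
    (φU φV : Submodule F V → Submodule F W)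
    (hreal : ∀ I J, I ⊓ J ≠ ⊥ ↔ φU I ⊓ φV J ≠ ⊥)
    (hint : ∀ I J, finrank F ↥(φU I ⊓ φV J) ≤ 1) :
    finrank F V / 2 * ((finrank F V + 1) / 2) ≤ finrank F W := by
  classical
  have : Finite V := Module.finite_of_finite F
  have : Finite W := Module.finite_of_finite F
  have ncard_inter (I J : Submodule F V) :
      (φU I ∩ φV J : Set W).ncard = if I ⊓ J = ⊥ then 1 else Nat.card F := by
    simpa only [Submodule.coe_inf, not_iff_not.mp (hreal I J)] using
      ncard_eq_ite_of_finrank_le_one _ (hint I J)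
  refine (Nat.pow_le_pow_iff_right (Finite.one_lt_card (α := F))).mp ?_
  calc Nat.card F ^ (finrank F V / 2 * ((finrank F V + 1) / 2))
      ≤ Nat.card (Submodule F V) := card_pow_mul_le_card_submodule (by omega)
    _ ≤ Nat.card W :=
        card_le_card_of_ncard_inter_eq_ite_inf_eq_bot (A := fun I => φU I) (B := fun J => φV J)
          one_ne_zero (Finite.one_lt_card (α := F)).ne ncard_inter
    _ = Nat.card F ^ finrank F W := natCard_eq_pow_finrank

end Subspaces

/-- Every projective realization of `P_d` over `F_2` with intersection dimension `1`
has dimension at least `⌊d/2⌋ · ⌈d/2⌉`. -/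
theorem stmt_2 (d : ℕ) (hd : 1 ≤ d) (D : ℕ)
    (φU φV : Submodule (ZMod 2) (Fin d → ZMod 2) → Submodule (ZMod 2) (Fin D → ZMod 2))
    (hreal : IsProjRealization (ZMod 2) (PdEdge d) D φU φV)
    (hint : ∀ I J, Module.finrank (ZMod 2) ↥(φU I ⊓ φV J) ≤ 1) :
    d / 2 * ((d + 1) / 2) ≤ D := by
  simpa only [finrank_fin_fun] using stmt_2_general φU φV hreal hint
end

section
/- There exists an absolute constant γ > 0 such that for every d ≥ 2, every bitwise decomposable projective assignment over F_2 of dimension D for the function SI_d (viewed as a Boolean function on {0,1}^{d²} × {0,1}^{d²}, where the first d² bits encode the entries of a d×d matrix A over F_2 and the last d² bits encode the entries of a d×d matrix B over F_2) satisfies D ≥ γ · d³ / log d. In other words, bitpdim(SI_d) = Ω(d³/log d). -/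
/-- A subspace of `F_2^D` spanned by a subset of the vectors `e_k − e_l` (`k ≠ l`). -/
def IsDiffSpanned {D : ℕ} (W : Submodule (ZMod 2) (Fin D → ZMod 2)) : Prop :=
  ∃ S : Set (Fin D → ZMod 2),
    (∀ w ∈ S, ∃ k l : Fin D, k ≠ l ∧
        w = Pi.single k (1 : ZMod 2) - Pi.single l (1 : ZMod 2)) ∧
    W = Submodule.span (ZMod 2) S

/-- A bitwise decomposable projective assignment of dimension `D` over `F_2` for a
Boolean function given (as a relation `E`) on `{0,1}^ι × {0,1}^ι`. -/
def IsBitDecompAssignment {ι : Type}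
    (E : (ι → Bool) → (ι → Bool) → Prop) (D : ℕ)
    (U V : ι → Bool → Submodule (ZMod 2) (Fin D → ZMod 2)) : Prop :=
  (∀ i a, IsDiffSpanned (U i a)) ∧
  (∀ j b, IsDiffSpanned (V j b)) ∧
  (∀ x y : ι → Bool, E x y ↔ (⨆ i, U i (x i)) ⊓ (⨆ j, V j (y j)) ≠ ⊥) ∧
  (∀ S₁ S₂ : Set (ι × Bool), Disjoint S₁ S₂ →
      (⨆ p ∈ S₁, U p.1 p.2) ⊓ (⨆ p ∈ S₂, U p.1 p.2) = ⊥) ∧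
  (∀ S₁ S₂ : Set (ι × Bool), Disjoint S₁ S₂ →
      (⨆ p ∈ S₁, V p.1 p.2) ⊓ (⨆ p ∈ S₂, V p.1 p.2) = ⊥)

/-- The `d × d` matrix over `F_2` encoded by a bit vector indexed by `Fin d × Fin d`. -/
def toMat (d : ℕ) (x : Fin d × Fin d → Bool) : Matrix (Fin d) (Fin d) (ZMod 2) :=
  fun i j => if x (i, j) then 1 else 0

/-- The edge relation of `SI_d` on bit vectors: the rowspans of the encoded matrices
intersect nontrivially. -/
def SIedge (d : ℕ) (x y : Fin d × Fin d → Bool) : Prop :=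
  Submodule.span (ZMod 2) (Set.range (toMat d x)) ⊓
      Submodule.span (ZMod 2) (Set.range (toMat d y)) ≠ ⊥

/-!
The argument is Nechiporuk's method. Set every row of `A` except row `r` to zero, and let `s_r` be
the dimension of the span of the subspaces that row `r` can contribute. By the modular law `B` then
influences the answer only through `W ∩ ℬ`, where `ℬ` is that span and `W` is a subspace depending
on `B` that is again spanned by differences `e_k − e_l`. All vectors of `ℬ` are supported on a set
of at most `2 s_r` coordinates, and on vectors with that support, membership in `W` depends only on
the partition of these coordinates into classes `k ∼ l ↔ e_k − e_l ∈ W`. So there are at most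
`(2 s_r) ^ (2 s_r)` different behaviours. The matrices `B = (I | M)` behave in `2 ^ Ω(d²)` pairwise
different ways, whence `s_r = Ω(d² / log d)`, and the independence of the `d` rows gives
`D ≥ ∑ s_r`.
-/

open Module Submodule

section DifferenceSpan

variable {R n : Type*} [Ring R] [DecidableEq n]

/-- A subspace of `R ^ n` spanned by differences `e_k − e_l` of standard basis vectors: the notion
`IsDiffSpanned` over an arbitrary ring. The case `k = l` only contributes the zero
vector. -/
def IsDifferenceSpan (W : Submodule R (n → R)) : Prop :=
  ∃ S : Set (n → R),
    (∀ w ∈ S, ∃ k l : n, w = Pi.single k 1 - Pi.single l 1) ∧ W = span R S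

theorem IsDiffSpanned.isDifferenceSpan {D : ℕ} {W : Submodule (ZMod 2) (Fin D → ZMod 2)}
    (hW : IsDiffSpanned W) : IsDifferenceSpan W := by
  obtain ⟨S, hS, rfl⟩ := hW
  refine ⟨S, fun w hw => ?_, rfl⟩
  obtain ⟨k, l, -, hkl⟩ := hS w hw
  exact ⟨k, l, hkl⟩

theorem IsDifferenceSpan.iSup {ι : Sort*} {W : ι → Submodule R (n → R)}
    (hW : ∀ i, IsDifferenceSpan (W i)) : IsDifferenceSpan (⨆ i, W i) := by
  choose S hS hWS using hW
  refine ⟨⋃ i, S i, fun w hw => ?_, by rw [span_iUnion, iSup_congr hWS]⟩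
  obtain ⟨i, hi⟩ := Set.mem_iUnion.1 hw
  exact hS i w hi

theorem IsDifferenceSpan.sup {W W' : Submodule R (n → R)} (hW : IsDifferenceSpan W)
    (hW' : IsDifferenceSpan W') : IsDifferenceSpan (W ⊔ W') := by
  rw [sup_eq_iSup]
  exact .iSup (Bool.forall_bool.2 ⟨hW', hW⟩)

theorem IsDifferenceSpan.exists_support_subset {K : Type*} [DivisionRing K] [Finite n]
    {W : Submodule K (n → K)} (hW : IsDifferenceSpan W) :
    ∃ T : Finset n, T.card ≤ 2 * finrank K W ∧ ∀ v ∈ W, Function.support v ⊆ T := by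
  obtain ⟨S, hS, rfl⟩ := hW
  obtain ⟨b, hbS, hspan, hli⟩ := exists_linearIndependent K S
  have : Fintype b := hli.setFinite.fintype
  choose k l hkl using fun w : b => hS w (hbS w.2)
  refine ⟨Finset.univ.biUnion fun w : b => {k w, l w}, ?_, fun v hv => ?_⟩
  · have hfinrank : finrank K (span K S) = Fintype.card b := by
      rw [← hspan, finrank_span_set_eq_card hli, Set.toFinset_card]
    rw [hfinrank, mul_comm]
    exact Finset.card_biUnion_le_card_mul _ _ _ fun w _ => Finset.card_le_two
  · rw [Function.support_subset_iff']
    intro i hi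
    have hb : span K b ≤ LinearMap.ker (LinearMap.proj (R := K) (φ := fun _ : n => K) i) := by
      refine span_le.2 fun w hw => ?_
      have hne : i ≠ k ⟨w, hw⟩ ∧ i ≠ l ⟨w, hw⟩ := by
        have := fun h => hi (Finset.mem_biUnion.2 ⟨⟨w, hw⟩, Finset.mem_univ _, h⟩)
        simpa using this
      have hw_eq : w = _ := hkl ⟨w, hw⟩
      rw [hw_eq]
      simp [hne.1, hne.2]
    exact hb (hspan ▸ hv)

/-- The partition of the coordinates attached to `W`, with `k` and `l` in the same class when
`e_k − e_l ∈ W`. If `W` is spanned by the edges of a graph, the classes are its connected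
components. -/
def differenceSetoid (W : Submodule R (n → R)) : Setoid n where
  r k l := Pi.single k (1 : R) - Pi.single l (1 : R) ∈ W
  iseqv :=
    { refl := fun k => by simp
      symm := fun h => by simpa using W.neg_mem h
      trans := fun h h' => by simpa using W.add_mem h h' }

open Classical in
theorem IsDifferenceSpan.sum_class_eq_zero [Fintype n] {W : Submodule R (n → R)}
    (hW : IsDifferenceSpan W) {v : n → R} (hv : v ∈ W) (t : n) :
    ∑ l with differenceSetoid W l t, v l = 0 := by
  let classSum : (n → R) →ₗ[R] R := ∑ l with differenceSetoid W l t, LinearMap.proj l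
  suffices W ≤ LinearMap.ker classSum by simpa [classSum] using this hv
  obtain ⟨S, hS, hWS⟩ := hW
  nth_rw 1 [hWS]
  refine span_le.2 fun w hw => ?_
  obtain ⟨k, l, rfl⟩ := hS w hw
  have hkl : differenceSetoid W k l := by
    rw [hWS]
    exact subset_span hw
  have hiff : differenceSetoid W k t ↔ differenceSetoid W l t :=
    ⟨(differenceSetoid W).trans' ((differenceSetoid W).symm' hkl),
      (differenceSetoid W).trans' hkl⟩
  simp [classSum, hiff]

open Classical in
-- Moving every coordinate of `v` onto a representative of its class in `T` changes `v` by an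
-- element of `W`, and the class sums are the coordinates of the result.
theorem mem_of_sum_class_eq_zero [Finite n] {W : Submodule R (n → R)} {T : Finset n} {v : n → R}
    (hvT : Function.support v ⊆ T)
    (hv : ∀ t : T, ∑ l : T with (differenceSetoid W).comap Subtype.val l t, v l = 0) :
    v ∈ W := by
  cases nonempty_fintype n
  set r : Setoid T := (differenceSetoid W).comap Subtype.val
  let rep : T → T := fun l => (⟦l⟧ : Quotient r).out
  have hsum : v = ∑ l : T, v l • Pi.single (l : n) (1 : R) := by
    conv_lhs => rw [pi_eq_sum_univ' v]
    rw [Finset.sum_coe_sort T fun l => v l • Pi.single l (1 : R)]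
    refine (Finset.sum_subset T.subset_univ fun l _ hl => ?_).symm
    rw [Function.support_subset_iff'.1 hvT l hl, zero_smul]
  have hrep : ∑ l : T, v l • Pi.single (rep l : n) (1 : R) = 0 := by
    rw [← Finset.sum_fiberwise _ (fun l : T => (⟦l⟧ : Quotient r))]
    refine Finset.sum_eq_zero fun q _ => ?_
    calc ∑ l : T with ⟦l⟧ = q, v l • Pi.single (rep l : n) (1 : R)
        = ∑ l : T with r l q.out, v l • Pi.single (q.out : n) (1 : R) := by
          refine Finset.sum_congr (Finset.filter_congr fun l _ => ?_) fun l hl => ?_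
          · exact Quotient.mk_eq_iff_out
          · rw [show rep l = q.out from
              congrArg Quotient.out (Quotient.mk_eq_iff_out.2 (Finset.mem_filter.1 hl).2)]
      _ = 0 := by rw [← Finset.sum_smul, hv, zero_smul]
  have hdiff : v = ∑ l : T, v l • (Pi.single (l : n) (1 : R) - Pi.single (rep l : n) (1 : R)) := by
    simp only [smul_sub, Finset.sum_sub_distrib, hrep, sub_zero, ← hsum]
  rw [hdiff]
  exact W.sum_mem fun l _ => W.smul_mem _ (r.symm' (Quotient.mk_out l))

open Classical in
theorem IsDifferenceSpan.mem_iff_sum_class_eq_zero [Finite n] {W : Submodule R (n → R)}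
    (hW : IsDifferenceSpan W) {T : Finset n} {v : n → R} (hvT : Function.support v ⊆ T) :
    v ∈ W ↔ ∀ t : T, ∑ l : T with (differenceSetoid W).comap Subtype.val l t, v l = 0 := by
  refine ⟨fun hv t => ?_, mem_of_sum_class_eq_zero hvT⟩
  cases nonempty_fintype n
  calc ∑ l : T with (differenceSetoid W).comap Subtype.val l t, v l
      = ∑ l ∈ T with differenceSetoid W l t, v l := by
        simp only [Finset.sum_filter, Setoid.comap_rel]
        exact Finset.sum_coe_sort T fun l => if differenceSetoid W l t then v l else 0
    _ = ∑ l with differenceSetoid W l t, v l := by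
        refine Finset.sum_subset (Finset.filter_subset_filter _ T.subset_univ) fun l hl hlT => ?_
        refine Function.support_subset_iff'.1 hvT l fun h => hlT ?_
        exact Finset.mem_filter.2 ⟨h, (Finset.mem_filter.1 hl).2⟩
    _ = 0 := hW.sum_class_eq_zero hv t

theorem IsDifferenceSpan.mem_iff_of_comap_differenceSetoid_eq [Finite n]
    {W W' : Submodule R (n → R)} (hW : IsDifferenceSpan W) (hW' : IsDifferenceSpan W')
    {T : Finset n} {v : n → R} (hvT : Function.support v ⊆ T)
    (h : (differenceSetoid W).comap ((↑) : T → n) = (differenceSetoid W').comap (↑)) :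
    v ∈ W ↔ v ∈ W' := by
  classical rw [hW.mem_iff_sum_class_eq_zero hvT, hW'.mem_iff_sum_class_eq_zero hvT, h]

end DifferenceSpan

theorem injective_setoid_representatives (α : Type*) :
    Function.Injective fun (r : Setoid α) (a : α) => (⟦a⟧ : Quotient r).out := by
  intro r r' h
  have hker (r : Setoid α) : Setoid.ker (fun a => (⟦a⟧ : Quotient r).out) = r := by
    ext a b
    rw [Setoid.ker_def, Quotient.out_inj, Quotient.eq]
  rw [← hker r, ← hker r']
  exact congrArg Setoid.ker h

theorem sum_finrank_le_of_iSupIndep {K E ρ : Type*} [DivisionRing K] [AddCommGroup E] [Module K E]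
    [FiniteDimensional K E] [Fintype ρ] {W : ρ → Submodule K E} (hW : iSupIndep W) :
    ∑ r, finrank K (W r) ≤ finrank K E := by
  classical
  rw [← finrank_directSum (R := K) fun r => W r]
  exact LinearMap.finrank_le_finrank_of_injective hW.dfinsupp_lsum_injective

section Nechiporuk

variable {R V n ι α : Type*} [Ring R] [AddCommGroup V] [Module R V] {U : ι → α → Submodule R V}

/-- The span of all subspaces contributed by the coordinates in a block `s`. Its dimension is the
share of the block `s` in Nechiporuk's bound. -/
def blockSpan (U : ι → α → Submodule R V) (s : Set ι) : Submodule R V :=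
  ⨆ i ∈ s, ⨆ a, U i a

theorem iSupIndep_blockSpan_fibers {ρ : Type*} (hind : iSupIndep fun i => ⨆ a, U i a)
    (π : ι → ρ) : iSupIndep fun r => blockSpan U (π ⁻¹' {r}) := by
  intro r
  refine (hind.disjoint_biSup_biSup (disjoint_compl_right (a := π ⁻¹' {r}))).mono_right ?_
  exact iSup₂_le fun r' hr' => biSup_mono fun i hi hir => hr' (hi.symm.trans hir)

theorem biSup_le_blockSpan (x : ι → α) (s : Set ι) : ⨆ i ∈ s, U i (x i) ≤ blockSpan U s :=
  iSup₂_mono fun i _ => le_iSup (U i) (x i)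

theorem disjoint_iSup_iff_of_eqOn_compl (hind : iSupIndep fun i => ⨆ a, U i a)
    {Q : Submodule R V} {s : Set ι} {x z : ι → α} (hz : Disjoint (⨆ i, U i (z i)) Q)
    (hxz : Set.EqOn x z sᶜ) :
    Disjoint (⨆ i, U i (x i)) Q ↔
      Disjoint (⨆ i ∈ s, U i (x i)) ((⨆ i ∈ sᶜ, U i (z i)) ⊔ Q) := by
  have hsplit : ⨆ i, U i (x i) = (⨆ i ∈ s, U i (x i)) ⊔ ⨆ i ∈ sᶜ, U i (z i) := by
    rw [iSup_split _ (· ∈ s)]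
    congr 1
    exact biSup_congr fun i hi => by rw [hxz hi]
  have hblocks : Disjoint (⨆ i ∈ s, U i (x i)) (⨆ i ∈ sᶜ, U i (z i)) :=
    (hind.disjoint_biSup_biSup disjoint_compl_right).mono (biSup_le_blockSpan x s)
      (biSup_le_blockSpan z sᶜ)
  have hrest : Disjoint (⨆ i ∈ sᶜ, U i (z i)) Q :=
    hz.mono_left (iSup₂_le fun i _ => le_iSup (fun i => U i (z i)) i)
  rw [hsplit]
  exact ⟨hblocks.disjoint_sup_right_of_disjoint_sup_left,
    hrest.disjoint_sup_left_of_disjoint_sup_right⟩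

theorem isDifferenceSpan_blockSpan [DecidableEq n] {U : ι → α → Submodule R (n → R)}
    (hU : ∀ i a, IsDifferenceSpan (U i a)) (s : Set ι) :
    IsDifferenceSpan (blockSpan U s) :=
  .iSup fun i => .iSup fun _ => .iSup (hU i)

-- `κ` indexes the subfunctions of the block `s` in the sense of Nechiporuk.
theorem card_le_pow_finrank_blockSpan {K κ : Type*} [DivisionRing K] [Finite n] [DecidableEq n]
    {E : (ι → α) → κ → Prop} {U : ι → α → Submodule K (n → K)} {Q : κ → Submodule K (n → K)}
    (hU : ∀ i a, IsDifferenceSpan (U i a)) (hQ : ∀ k, IsDifferenceSpan (Q k))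
    (hind : iSupIndep fun i => ⨆ a, U i a)
    (hE : ∀ x k, E x k ↔ ¬ Disjoint (⨆ i, U i (x i)) (Q k))
    (s : Set ι) (z : ι → α) (hz : ∀ k, ¬ E z k)
    (hsep : ∀ k k', (∀ x, Set.EqOn x z sᶜ → (E x k ↔ E x k')) → k = k') :
    Nat.card κ ≤ (2 * finrank K (blockSpan U s)) ^ (2 * finrank K (blockSpan U s)) := by
  obtain ⟨T, hTcard, hT⟩ := (isDifferenceSpan_blockSpan hU s).exists_support_subset
  let rest := ⨆ i ∈ sᶜ, U i (z i)
  have hrestQ (k : κ) : IsDifferenceSpan (rest ⊔ Q k) :=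
    (IsDifferenceSpan.iSup fun i => .iSup fun _ => hU i (z i)).sup (hQ k)
  have hinj :
      Function.Injective fun k => (differenceSetoid (rest ⊔ Q k)).comap ((↑) : T → n) := by
    intro k k' hkk'
    refine hsep k k' fun x hx => ?_
    have hdisj (k : κ) :=
      disjoint_iSup_iff_of_eqOn_compl hind (not_not.1 ((hE z k).not.1 (hz k))) hx
    rw [hE, hE, hdisj, hdisj, disjoint_def, disjoint_def]
    refine not_congr (forall₂_congr fun v hv => ?_)
    have hvT : Function.support v ⊆ T := hT v (biSup_le_blockSpan x s hv)
    rw [(hrestQ k).mem_iff_of_comap_differenceSetoid_eq (hrestQ k') hvT hkk']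
  calc Nat.card κ ≤ Nat.card (T → T) :=
        Nat.card_le_card_of_injective _ ((injective_setoid_representatives T).comp hinj)
    _ = T.card ^ T.card := by simp
    _ ≤ _ := Nat.pow_self_mono hTcard

end Nechiporuk

section SubspaceIntersection

variable {d : ℕ}

theorem SIedge_iff_of_eq_zero_off_row {r : Fin d} {x y : Fin d × Fin d → Bool}
    (hx : ∀ i ≠ r, toMat d x i = 0) :
    SIedge d x y ↔ toMat d x r ≠ 0 ∧ toMat d x r ∈ span (ZMod 2) (Set.range (toMat d y)) := by
  have hspan : span (ZMod 2) (Set.range (toMat d x)) = span (ZMod 2) {toMat d x r} := by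
    refine le_antisymm (span_le.2 ?_)
      (span_mono (Set.singleton_subset_iff.2 (Set.mem_range_self r)))
    rintro _ ⟨i, rfl⟩
    by_cases hi : i = r
    · exact hi ▸ mem_span_singleton_self _
    · exact hx i hi ▸ zero_mem _
  rw [SIedge, hspan, Ne, ← disjoint_iff, disjoint_comm, disjoint_span_singleton, Classical.not_imp,
    and_comm]

/-- The bits of the `d × d` matrix whose rows outside `P` vanish and whose rows in `P` are, up to
a permutation of the columns, those of `(I | M)`, with `I` in the columns in `P`. -/
def pivotBits {P : Finset (Fin d)} (M : P × ↥Pᶜ → Bool) : Fin d × Fin d → Bool := fun p =>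
  if hi : p.1 ∈ P then
    if hj : p.2 ∈ P then decide (p.1 = p.2) else M (⟨p.1, hi⟩, ⟨p.2, Finset.mem_compl.2 hj⟩)
  else false

variable {P : Finset (Fin d)} {M M' : P × ↥Pᶜ → Bool}

theorem toMat_pivotBits_pivot (i j : P) :
    toMat d (pivotBits M) i j = if i = j then 1 else 0 := by
  simp [toMat, pivotBits]

theorem toMat_pivotBits_free (i : P) (j : ↥Pᶜ) :
    toMat d (pivotBits M) i j = if M (i, j) then 1 else 0 := by
  rw [toMat, pivotBits, dif_pos i.2, dif_neg (Finset.mem_compl.1 j.2)]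

theorem toMat_pivotBits_of_notMem {i : Fin d} (hi : i ∉ P) : toMat d (pivotBits M) i = 0 := by
  ext j
  simp [toMat, pivotBits, hi]

theorem apply_eq_sum_of_mem_span_pivotBits {v : Fin d → ZMod 2}
    (hv : v ∈ span (ZMod 2) (Set.range (toMat d (pivotBits M)))) (j : ↥Pᶜ) :
    v j = ∑ i : P, v i * toMat d (pivotBits M) i j := by
  induction hv using span_induction with
  | mem w hw =>
    obtain ⟨r, rfl⟩ := hw
    by_cases hr : r ∈ P
    · lift r to P using hr
      simp [toMat_pivotBits_pivot]
    · simp [toMat_pivotBits_of_notMem hr]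
  | zero => simp
  | add v w _ _ hv hw => simp [hv, hw, add_mul, Finset.sum_add_distrib]
  | smul c v _ hv => simp [hv, Finset.mul_sum, mul_assoc]

theorem eq_of_rows_pivotBits_mem_span
    (h : ∀ i : P, toMat d (pivotBits M) i ∈ span (ZMod 2) (Set.range (toMat d (pivotBits M')))) :
    M = M' := by
  ext ⟨i, j⟩
  have hij := apply_eq_sum_of_mem_span_pivotBits (h i) j
  simp only [toMat_pivotBits_pivot, toMat_pivotBits_free, ite_mul, one_mul, zero_mul,
    Finset.sum_ite_eq, Finset.mem_univ, if_true] at hij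
  revert hij
  cases M (i, j) <;> cases M' (i, j) <;> simp

theorem not_SIedge_false (y : Fin d × Fin d → Bool) : ¬ SIedge d (fun _ => false) y := by
  have hzero : toMat d (fun _ => false) = 0 := by
    ext i j
    simp [toMat]
  rw [SIedge, hzero, Ne, not_not, span_eq_bot.2 (by rintro _ ⟨i, rfl⟩; rfl), bot_inf_eq]

theorem pivotBits_separated (r : Fin d)
    (h : ∀ x, Set.EqOn x (fun _ => false) (Prod.fst ⁻¹' {r})ᶜ →
      (SIedge d x (pivotBits M) ↔ SIedge d x (pivotBits M'))) : M = M' := by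
  refine eq_of_rows_pivotBits_mem_span fun i => ?_
  let x : Fin d × Fin d → Bool := fun p => decide (p.1 = r) && pivotBits M (i, p.2)
  have hx_row : toMat d x r = toMat d (pivotBits M) i := by
    ext j
    simp [x, toMat]
  have hx_off (k : Fin d) (hk : k ≠ r) : toMat d x k = 0 := by
    ext j
    simp [x, toMat, hk]
  have hi_ne : toMat d (pivotBits M) i ≠ 0 := fun h0 => by
    simpa [toMat_pivotBits_pivot] using congrFun h0 i
  have hx_iff := h x fun p hp => by simp [x, show p.1 ≠ r from hp]
  rw [SIedge_iff_of_eq_zero_off_row hx_off, SIedge_iff_of_eq_zero_off_row hx_off, hx_row] at hx_iff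
  exact (hx_iff.1 ⟨hi_ne, subset_span (Set.mem_range_self _)⟩).2

end SubspaceIntersection

section Asymptotics

theorem le_mul_logb_of_two_pow_le_self_pow {N m : ℕ} (h : 2 ^ N ≤ m ^ m) :
    (N : ℝ) ≤ m * Real.logb 2 m := by
  have hpow : (2 : ℝ) ^ N ≤ (m : ℝ) ^ m := by exact_mod_cast h
  have hlog := Real.logb_le_logb_of_le one_lt_two (by positivity) hpow
  rwa [Real.logb_pow, Real.logb_pow, Real.logb_self_eq_one one_lt_two, mul_one] at hlog

theorem sq_le_mul_logb_of_two_pow_le_self_pow {d m : ℕ} (hd : 2 ≤ d)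
    (h : 2 ^ (d / 2 * (d - d / 2)) ≤ m ^ m) : (d : ℝ) ^ 2 ≤ 12 * m * Real.logb 2 d := by
  have hd_real : (2 : ℝ) ≤ d := by exact_mod_cast hd
  have hlog : 1 ≤ Real.logb 2 d := by
    rwa [Real.le_logb_iff_rpow_le one_lt_two (by linarith), Real.rpow_one]
  rcases le_total ((d : ℝ) ^ 2) m with hdm | hmd
  · nlinarith
  have hlog_m : Real.logb 2 m ≤ 2 * Real.logb 2 d := by
    rcases m.eq_zero_or_pos with rfl | hm
    · rw [Nat.cast_zero, Real.logb_zero]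
      positivity
    have := Real.logb_le_logb_of_le one_lt_two (by exact_mod_cast hm) hmd
    rwa [Real.logb_pow, Nat.cast_ofNat] at this
  have hd_sq : d * d ≤ 3 * (d / 2) * (2 * (d - d / 2)) := by gcongr <;> omega
  have hd_sq_real : (d : ℝ) ^ 2 ≤ 6 * ↑(d / 2 * (d - d / 2)) := by
    rw [sq]
    exact_mod_cast hd_sq.trans_eq (by ring)
  calc (d : ℝ) ^ 2 ≤ 6 * ↑(d / 2 * (d - d / 2)) := hd_sq_real
    _ ≤ 6 * (m * Real.logb 2 m) := by gcongr; exact le_mul_logb_of_two_pow_le_self_pow h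
    _ ≤ 6 * (m * (2 * Real.logb 2 d)) := by gcongr
    _ = 12 * m * Real.logb 2 d := by ring

end Asymptotics

theorem sq_le_finrank_row_mul_logb {K : Type*} [DivisionRing K] {d D : ℕ} (hd : 2 ≤ d)
    {U : Fin d × Fin d → Bool → Submodule K (Fin D → K)}
    {Q : (Fin d × Fin d → Bool) → Submodule K (Fin D → K)}
    (hU : ∀ i a, IsDifferenceSpan (U i a)) (hQ : ∀ y, IsDifferenceSpan (Q y))
    (hind : iSupIndep fun i => ⨆ a, U i a)
    (hE : ∀ x y, SIedge d x y ↔ ¬ Disjoint (⨆ i, U i (x i)) (Q y)) (r : Fin d) :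
    (d : ℝ) ^ 2 ≤ 24 * finrank K (blockSpan U (Prod.fst ⁻¹' {r})) * Real.logb 2 d := by
  obtain ⟨P, -, hP⟩ : ∃ P ⊆ (Finset.univ : Finset (Fin d)), P.card = d / 2 :=
    Finset.exists_subset_card_eq (by simpa using d.div_le_self 2)
  have hcount := card_le_pow_finrank_blockSpan (κ := P × ↥Pᶜ → Bool) hU
    (fun M => hQ (pivotBits M)) hind (fun x M => hE x (pivotBits M)) (Prod.fst ⁻¹' {r})
    (fun _ => false) (fun M => not_SIedge_false _) fun M M' => pivotBits_separated r
  have hcard : Nat.card (P × ↥Pᶜ → Bool) = 2 ^ (d / 2 * (d - d / 2)) := by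
    simp [Nat.card_eq_fintype_card, hP]
  have := sq_le_mul_logb_of_two_pow_le_self_pow hd (hcard ▸ hcount)
  push_cast at this
  linarith

theorem IsBitDecompAssignment.iSupIndep_left {ι : Type} {E : (ι → Bool) → (ι → Bool) → Prop} {D : ℕ}
    {U V : ι → Bool → Submodule (ZMod 2) (Fin D → ZMod 2)} (h : IsBitDecompAssignment E D U V) :
    iSupIndep fun i => ⨆ a, U i a := by
  obtain ⟨-, -, -, hdisj, -⟩ := h
  intro i
  have hi := disjoint_iff.2 (hdisj {p | p.1 = i} {p | p.1 = i}ᶜ disjoint_compl_right)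
  refine hi.mono (iSup_le fun a => le_iSup₂_of_le (i, a) rfl le_rfl) ?_
  exact iSup₂_le fun j hj => iSup_le fun a => le_iSup₂_of_le (j, a) hj le_rfl

theorem stmt_18_general {K : Type*} [DivisionRing K] {d D : ℕ} (hd : 2 ≤ d)
    {U : Fin d × Fin d → Bool → Submodule K (Fin D → K)}
    {Q : (Fin d × Fin d → Bool) → Submodule K (Fin D → K)}
    (hU : ∀ i a, IsDifferenceSpan (U i a)) (hQ : ∀ y, IsDifferenceSpan (Q y))
    (hind : iSupIndep fun i => ⨆ a, U i a)
    (hE : ∀ x y, SIedge d x y ↔ ¬ Disjoint (⨆ i, U i (x i)) (Q y)) :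
    1 / 24 * (d : ℝ) ^ 3 / Real.logb 2 d ≤ D := by
  have hlog : 0 < Real.logb 2 d := Real.logb_pos one_lt_two (by exact_mod_cast hd)
  have hsum : ∑ r : Fin d, finrank K (blockSpan U (Prod.fst ⁻¹' {r})) ≤ D := by
    simpa using sum_finrank_le_of_iSupIndep (iSupIndep_blockSpan_fibers hind Prod.fst)
  rw [div_le_iff₀ hlog]
  calc 1 / 24 * (d : ℝ) ^ 3 = 1 / 24 * ∑ _r : Fin d, (d : ℝ) ^ 2 := by
        simp; ring
    _ ≤ 1 / 24 * ∑ r : Fin d,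
          24 * finrank K (blockSpan U (Prod.fst ⁻¹' {r})) * Real.logb 2 d := by
        gcongr with r
        exact sq_le_finrank_row_mul_logb hd hU hQ hind hE r
    _ = ↑(∑ r : Fin d, finrank K (blockSpan U (Prod.fst ⁻¹' {r}))) * Real.logb 2 d := by
        push_cast
        rw [← Finset.sum_mul, ← Finset.mul_sum]
        ring
    _ ≤ D * Real.logb 2 d := by gcongr

/-- `bitpdim(SI_d) = Ω(d³ / log d)`: there is an absolute constant `γ > 0` such that
for every `d ≥ 2`, every bitwise decomposable projective assignment over `F_2` of
dimension `D` for `SI_d` satisfies `D ≥ γ · d³ / log d` (log base 2). -/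
theorem stmt_18 : ∃ γ : ℝ, 0 < γ ∧
    ∀ d : ℕ, 2 ≤ d →
    ∀ (D : ℕ) (U V : Fin d × Fin d → Bool → Submodule (ZMod 2) (Fin D → ZMod 2)),
      IsBitDecompAssignment (SIedge d) D U V →
      γ * (d : ℝ) ^ 3 / Real.logb 2 d ≤ D := by
  exact ⟨1 / 24, by norm_num, fun d hd D U V h => stmt_18_general hd
    (fun i a => (h.1 i a).isDifferenceSpan)
    (fun y => .iSup fun j => (h.2.1 j (y j)).isDifferenceSpan)
    h.iSupIndep_left fun x y => by rw [disjoint_iff]; exact h.2.2.1 x y⟩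
end
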